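/- Let (Ω, P) be a probability space, let N > K ≥ 1 be integers, β̂ > 0, and let X : Ω → ℝ have the Gamma distribution with integer shape N−K+1 and scale β̂. Let Y : Ω → ℝ be independent of X, with Y ≥ 0 almost surely and integrable. Let α > 0 and C ≥ 0, and define R(p) = E[ log₂( 1 + α²·p·X/(α²·p·C·X + p·Y + 1) ) ] for p ≥ 0. Then, as p → 0 from the right, p / R(p) tends to ln 2 / ( α²·(N−K+1)·β̂ ). -/

import Mathlib

open MeasureTheory ProbabilityTheory Filter

lemma aux_meas (a r : ℝ) : Measurable (gammaPDF a r) :=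
  (measurable_gammaPDFReal a r).ennreal_ofReal

lemma aux_lintegral (a r : ℝ) (ha : 0 < a) (hr : 0 < r) :
    ∫⁻ x, ENNReal.ofReal x ∂(gammaMeasure a r) = ENNReal.ofReal (a / r) := by
  unfold gammaMeasure
  rw [lintegral_withDensity_eq_lintegral_mul _
    (aux_meas a r) ENNReal.measurable_ofReal]
  have h : ∀ x, (gammaPDF a r * ENNReal.ofReal) x
      = ENNReal.ofReal (a / r) * gammaPDF (a + 1) r x := by
    intro x
    simp only [Pi.mul_apply]
    rcases lt_or_ge x 0 with hx | hx
    · rw [gammaPDF_of_neg hx, gammaPDF_of_neg hx]; simp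
    · rw [gammaPDF_of_nonneg hx, gammaPDF_of_nonneg hx, mul_comm,
        ← ENNReal.ofReal_mul hx, ← ENNReal.ofReal_mul (by positivity)]
      congr 1
      have hG := (Real.Gamma_pos_of_pos ha).ne'
      rw [Real.Gamma_add_one ha.ne', Real.rpow_add_one hr.ne', add_sub_cancel_right]
      rcases hx.eq_or_lt with rfl | hx
      · simp [Real.zero_rpow ha.ne']
      · rw [Real.rpow_sub_one hx.ne']
        field_simp
  simp_rw [h]
  rw [lintegral_const_mul _ (aux_meas _ r),
    lintegral_gammaPDF_eq_one (by positivity) hr, mul_one]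

lemma aux_nonneg (a r : ℝ) : ∀ᵐ x ∂(gammaMeasure a r), 0 ≤ x := by
  unfold gammaMeasure
  rw [ae_withDensity_iff (aux_meas a r)]
  refine Eventually.of_forall fun x hx => ?_
  by_contra h
  exact hx (gammaPDF_of_neg (not_le.mp h))

/-- Let X have the Gamma distribution with integer shape N−K+1 and scale
β̂ > 0 and let Y ≥ 0 a.s. be integrable and independent of X. With α > 0 and C ≥ 0 and
R(p) = E[log₂(1 + α²·p·X/(α²·p·C·X + p·Y + 1))], as p → 0⁺ the ratio p/R(p) tends to
ln 2/(α²·(N−K+1)·β̂)  (the minimum energy per bit). -/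
theorem min_energy_per_bit {Ω : Type*} [MeasurableSpace Ω] (P : Measure Ω)
    [IsProbabilityMeasure P] (N K : ℕ) (hK : 1 ≤ K) (hNK : K < N) (βh : ℝ) (hβ : 0 < βh)
    (X Y : Ω → ℝ) (hXm : Measurable X) (hYm : Measurable Y)
    (hX : Measure.map X P = gammaMeasure (N - K + 1 : ℕ) (1 / βh))
    (hindep : IndepFun X Y P)
    (hYpos : ∀ᵐ ω ∂P, 0 ≤ Y ω) (hYint : Integrable Y P)
    (α C : ℝ) (hα : 0 < α) (hC : 0 ≤ C) :
    Tendsto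
      (fun p : ℝ => p / ∫ ω, Real.logb 2
        (1 + α ^ 2 * p * X ω / (α ^ 2 * p * C * X ω + p * Y ω + 1)) ∂P)
      (nhdsWithin 0 (Set.Ioi 0))
      (nhds (Real.log 2 / (α ^ 2 * ((N : ℝ) - K + 1) * βh))) := by
  have hr : 0 < 1 / βh := by positivity
  have ha : (0 : ℝ) < ((N - K + 1 : ℕ) : ℝ) := by positivity
  have hXpos : ∀ᵐ ω ∂P, 0 ≤ X ω := by
    have := aux_nonneg ((N - K + 1 : ℕ) : ℝ) (1 / βh)
    rw [← hX] at this
    exact ae_of_ae_map hXm.aemeasurable this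
  have hl : ∫⁻ ω, ENNReal.ofReal (X ω) ∂P
      = ENNReal.ofReal (((N - K + 1 : ℕ) : ℝ) / (1 / βh)) := by
    rw [← aux_lintegral _ _ ha hr, ← hX, lintegral_map ENNReal.measurable_ofReal hXm]
  have hXint : Integrable X P := by
    rw [← lintegral_ofReal_ne_top_iff_integrable hXm.aestronglyMeasurable hXpos, hl]
    exact ENNReal.ofReal_ne_top
  have hEX : ∫ ω, X ω ∂P = ((N : ℝ) - K + 1) * βh := by
    rw [integral_eq_lintegral_of_nonneg_ae hXpos hXm.aestronglyMeasurable, hl,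
      ENNReal.toReal_ofReal (by positivity)]
    push_cast [Nat.cast_sub hNK.le]
    field_simp
  have hlog2 : 0 < Real.log 2 := Real.log_pos one_lt_two
  have key : Tendsto (fun p : ℝ => ∫ ω, p⁻¹ * Real.logb 2
        (1 + α ^ 2 * p * X ω / (α ^ 2 * p * C * X ω + p * Y ω + 1)) ∂P)
      (nhdsWithin 0 (Set.Ioi 0)) (nhds (∫ ω, α ^ 2 * X ω / Real.log 2 ∂P)) := by
    refine tendsto_integral_filter_of_dominated_convergence
      (fun ω => α ^ 2 * X ω / Real.log 2) ?_ ?_ ((hXint.const_mul _).div_const _) ?_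
    · refine Eventually.of_forall fun p => Measurable.aestronglyMeasurable ?_
      unfold Real.logb
      fun_prop
    · filter_upwards [self_mem_nhdsWithin] with p hp
      have hp : 0 < p := hp
      filter_upwards [hXpos, hYpos] with ω hx hy
      have hd : 1 ≤ α ^ 2 * p * C * X ω + p * Y ω + 1 := by
        have : 0 ≤ α ^ 2 * p * C * X ω := by positivity
        have : 0 ≤ p * Y ω := by positivity
        linarith
      have hz : 0 ≤ α ^ 2 * p * X ω / (α ^ 2 * p * C * X ω + p * Y ω + 1) := by positivity
      have hz2 : α ^ 2 * p * X ω / (α ^ 2 * p * C * X ω + p * Y ω + 1) ≤ α ^ 2 * p * X ω :=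
        div_le_self (by positivity) hd
      set z := α ^ 2 * p * X ω / (α ^ 2 * p * C * X ω + p * Y ω + 1)
      have h1 : 0 ≤ Real.log (1 + z) := Real.log_nonneg (by linarith)
      have h2 : Real.log (1 + z) ≤ α ^ 2 * p * X ω := by
        have := Real.log_le_sub_one_of_pos (show 0 < 1 + z by linarith)
        linarith
      unfold Real.logb
      rw [Real.norm_of_nonneg (by positivity)]
      calc p⁻¹ * (Real.log (1 + z) / Real.log 2)
          ≤ p⁻¹ * ((α ^ 2 * p * X ω) / Real.log 2) := by gcongr
        _ = _ := by field_simp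
    · refine Eventually.of_forall fun ω => ?_
      have hd : HasDerivAt (fun p : ℝ => Real.logb 2
          (1 + α ^ 2 * p * X ω / (α ^ 2 * p * C * X ω + p * Y ω + 1)))
          (α ^ 2 * X ω / Real.log 2) 0 := by
        unfold Real.logb
        have hn : HasDerivAt (fun p : ℝ => α ^ 2 * p * X ω) (α ^ 2 * X ω) 0 := by
          simpa using ((hasDerivAt_id (0 : ℝ)).const_mul (α ^ 2)).mul_const (X ω)
        have hm : HasDerivAt (fun p : ℝ => α ^ 2 * p * C * X ω + p * Y ω + 1)
            (α ^ 2 * C * X ω + Y ω) 0 := by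
          simpa using (((((hasDerivAt_id (0 : ℝ)).const_mul (α ^ 2)).mul_const C).mul_const
            (X ω)).add ((hasDerivAt_id (0 : ℝ)).mul_const (Y ω))).add_const 1
        have := (((hn.div hm (by simp)).const_add 1).log (by simp)).div_const (Real.log 2)
        simpa using this
      have := hd.tendsto_slope_zero_right
      simpa using this
  rw [integral_div, integral_const_mul, hEX] at key
  have hc : (0 : ℝ) < (N : ℝ) - K + 1 := by
    have : (K : ℝ) < N := by exact_mod_cast hNK
    linarith
  have := key.inv₀ (by positivity)
  rw [inv_div, ← mul_assoc] at this
  refine this.congr fun p => ?_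
  rw [integral_const_mul, mul_inv, inv_inv, div_eq_mul_inv]
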